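/- Let κ be an uncountable cardinal, G a κ-free abelian group with Hom(G, ℤ) = 0, presented as F/K with F free on {e_α : α < λ}, λ = |G|, satisfying that the images π(F_β) (π : F → G the projection, F_β generated by {e_α : α < β}) are strictly increasing in β < λ. Let S be the equation system given by a free generating set {k_β : β < λ} of K. Then every subsystem T ⊆ S with |T| < κ has a nontrivial solution in ℤ: there is an assignment of nonzero integers to all variables appearing in T satisfying every equation of T. -/

import Mathlib

universe u

/-!
A `κ`-free group `G` has, for every set `A` of fewer than `κ` indices, a free subgroup
`M = π(F_A)`, and a homomorphism `M → ℤ` not vanishing on any `π(e_α)`, `α ∈ A`, assigns nonzero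
values to the variables in `A` which satisfy every relation among them. So everything rests on
separation: in a free module, a well-ordered family `v` with `v a ∉ ⟨v b : b < a⟩` admits a
functional vanishing at none of its members.

If the basis can be well-ordered so that each basis element is the leading one of only finitely
many `v a`, such a functional is found by recursion, each value having to avoid finitely many
scalars. To find that order, call a set `B` of basis elements closed if `v a ∈ ⟨B⟩` whenever the
filtration `a ↦ ⟨v b : b < a⟩` jumps inside `⟨B⟩` at `a`. Adjoining finitely many basis elements to
`B` creates only finitely many new jumps, by Noetherianity. Hence only finitely many `v a` lie in
`⟨B ∪ X⟩` but not in `⟨B⟩` when `B` is closed and `X` finite, and the closure of `B ∪ {x}` has only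
countably many new elements. The basis is therefore exhausted by a well-ordered chain of closed sets
with countable steps, and ordering each step in type at most `ω` gives the required order.
-/

open Finsupp Set Submodule

section Jumps

variable {R M A : Type*} [Ring R] [AddCommGroup M] [Module R M] [LinearOrder A]

/-- The indices at which the filtration of a module by the spans of the initial segments of a
family `v` strictly increases inside the submodule `N`. -/
def jumpSet (v : A → M) (N : Submodule R M) : Set A :=
  {a | ∃ y ∈ N, y ∈ span R (v '' Iic a) ∧ y ∉ span R (v '' Iio a)}

theorem jumpSet_mono (v : A → M) : Monotone (jumpSet (R := R) v) :=
  fun _ _ h _ ⟨y, hy, hya⟩ => ⟨y, h hy, hya⟩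

theorem mem_jumpSet_of_mem {v : A → M} {N : Submodule R M} {a : A}
    (hv : v a ∉ span R (v '' Iio a)) (ha : v a ∈ N) : a ∈ jumpSet v N :=
  ⟨v a, ha, subset_span (mem_image_of_mem v self_mem_Iic), hv⟩

theorem jumpSet_iSup_of_directed {ι : Sort*} (v : A → M) {N : ι → Submodule R M}
    (hN : Directed (· ≤ ·) N) : jumpSet v (⨆ i, N i) = ⋃ i, jumpSet v (N i) := by
  refine Subset.antisymm ?_ (iUnion_subset fun i => jumpSet_mono v (le_iSup N i))
  rintro a ⟨y, hy, hya⟩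
  rcases isEmpty_or_nonempty ι with _ | _
  · rw [iSup_of_empty, mem_bot] at hy
    exact absurd (hy ▸ zero_mem _) hya.2
  · obtain ⟨i, hi⟩ := (mem_iSup_of_directed N hN).mp hy
    exact mem_iUnion.mpr ⟨i, y, hi, hya⟩

theorem finite_jumpSet_sup_sdiff [IsNoetherianRing R] [WellFoundedLT A] (v : A → M)
    (N : Submodule R M) {P : Submodule R M} (hP : P.FG) :
    (jumpSet v (N ⊔ P) \ jumpSet v N).Finite := by
  have : IsNoetherian R P := isNoetherian_of_fg_of_noetherian P hP
  -- A new jump enlarges the trace on `P` of the filtration taken modulo `N`.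
  let newPart : ↥(jumpSet v (N ⊔ P) \ jumpSet v N) → Submodule R P := fun a =>
    (N ⊔ span R (v '' Iio a.1)).comap P.subtype
  have newPart_strictMono : StrictMono newPart := by
    rintro ⟨a, ⟨y, hy, hya, hya'⟩, haN⟩ ⟨b, -⟩ (hab : a < b)
    refine lt_of_le_not_ge (comap_mono (sup_le_sup_left (span_mono (by gcongr)) N)) fun hle => ?_
    obtain ⟨n, hn, p, hp, rfl⟩ := mem_sup.mp hy
    have hpb : (⟨p, hp⟩ : P) ∈ (N ⊔ span R (v '' Iio b)).comap P.subtype :=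
      mem_sup.mpr ⟨-n, neg_mem hn, n + p,
        span_mono (image_mono (Iic_subset_Iio.mpr hab)) hya, neg_add_cancel_left n p⟩
    obtain ⟨n', hn', s, hs, hp_eq : n' + s = p⟩ := mem_sup.mp (hle hpb)
    have hsum : n + p = (n + n') + s := by rw [← hp_eq, add_assoc]
    refine haN ⟨n + n', add_mem hn hn', ?_, fun h => hya' (hsum ▸ add_mem h hs)⟩
    exact (add_mem_cancel_right (span_mono (image_mono Iio_subset_Iic_self) hs)).mp (hsum ▸ hya)
  have : WellFoundedGT ↥(jumpSet v (N ⊔ P) \ jumpSet v N) := newPart_strictMono.wellFoundedGT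
  exact finite_coe_iff.mp (Finite.of_wellFoundedLT_wellFoundedGT _)

end Jumps

theorem exists_wellOrder_monotone_of_countable_fiber {I W : Type*} [LinearOrder W] [WellFoundedLT W]
    {rank : I → W} (hrank : ∀ w, (rank ⁻¹' {w}).Countable) :
    ∃ (_ : LinearOrder I) (_ : WellFoundedLT I),
      Monotone rank ∧ ∀ x, {y | rank y = rank x ∧ y ≤ x}.Finite := by
  choose pos pos_injOn using fun w => countable_iff_exists_injOn.mp (hrank w)
  let place (y : I) : W ×ₗ ℕ := toLex (rank y, pos (rank y) y)
  have place_injective : Function.Injective place := fun y z h => by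
    obtain ⟨hr : rank y = rank z, hp : pos (rank y) y = pos (rank z) z⟩ :=
      Prod.ext_iff.mp (toLex.injective h)
    exact pos_injOn (rank y) rfl hr.symm (by rwa [← hr] at hp)
  let order : LinearOrder I := LinearOrder.lift' place place_injective
  have place_strictMono : StrictMono place := fun _ _ h => h
  refine ⟨order, place_strictMono.wellFoundedLT,
    fun y z h => Prod.Lex.monotone_fst _ _ (place_strictMono.monotone h), fun x => ?_⟩
  refine Set.Finite.of_finite_image ((finite_Iic (pos (rank x) x)).subset ?_)
    ((pos_injOn (rank x)).mono fun y hy => hy.1)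
  rintro _ ⟨y, ⟨hr, hyx⟩, rfl⟩
  rcases Prod.Lex.toLex_le_toLex.mp (place_strictMono.monotone hyx) with hlt | ⟨-, hle⟩
  · exact absurd hr hlt.ne
  · exact hr ▸ hle

section JumpClosed

universe t

variable {R A : Type*} {I : Type t} [Ring R] [LinearOrder A] {v : A → I →₀ R} {B : Set I}

/-- A set `B` of basis elements of a free module is jump-closed for the family `v` if it supports
every `v a` such that `a` is a jump of the filtration inside the span of `B`. The basis is
exhausted by a well-ordered chain of such sets. -/
def IsJumpClosed (v : A → I →₀ R) (B : Set I) : Prop :=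
  ∀ a ∈ jumpSet v (supported R R B), v a ∈ supported R R B

theorem IsJumpClosed.sInter {S : Set (Set I)} (hS : ∀ B ∈ S, IsJumpClosed v B) :
    IsJumpClosed v (⋂₀ S) := fun a ha =>
  subset_sInter fun B hB =>
    hS B hB a (jumpSet_mono v (supported_mono (sInter_subset_of_mem hB)) ha)

theorem jumpSet_supported_iUnion {ι : Type*} (v : A → I →₀ R) {B : ι → Set I}
    (hB : Directed (· ⊆ ·) B) :
    jumpSet v (supported R R (⋃ i, B i)) = ⋃ i, jumpSet v (supported R R (B i)) := by
  rw [supported_iUnion]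
  exact jumpSet_iSup_of_directed v (hB.mono_comp _ fun _ _ h => supported_mono h)

theorem IsJumpClosed.iUnion {ι : Type*} {B : ι → Set I} (hdir : Directed (· ⊆ ·) B)
    (hB : ∀ i, IsJumpClosed v (B i)) : IsJumpClosed v (⋃ i, B i) := by
  intro a ha
  rw [jumpSet_supported_iUnion v hdir, mem_iUnion] at ha
  obtain ⟨i, hi⟩ := ha
  exact supported_mono (subset_iUnion B i) (hB i a hi)

variable [IsNoetherianRing R] [WellFoundedLT A]

theorem finite_jumpSet_supported_union_sdiff (v : A → I →₀ R) (B : Set I) {X : Set I}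
    (hX : X.Finite) :
    (jumpSet v (supported R R (B ∪ X)) \ jumpSet v (supported R R B)).Finite := by
  rw [supported_union]
  refine finite_jumpSet_sup_sdiff v _ ?_
  rw [supported_eq_span_single]
  exact fg_span (hX.image _)

theorem IsJumpClosed.finite_mem_supported_union (hB : IsJumpClosed v B)
    (hv : ∀ a, v a ∉ span R (v '' Iio a)) {X : Set I} (hX : X.Finite) :
    {a | v a ∈ supported R R (B ∪ X) ∧ v a ∉ supported R R B}.Finite :=
  (finite_jumpSet_supported_union_sdiff v B hX).subset fun a ⟨haX, haB⟩ =>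
    ⟨mem_jumpSet_of_mem (hv a) haX, fun ha => haB (hB a ha)⟩

theorem exists_finset_superset_support_subset (v : A → I →₀ R) (B : Set I) (X : Finset I) :
    ∃ Y : Finset I, X ⊆ Y ∧
      ∀ a ∈ jumpSet v (supported R R (B ∪ X)) \ jumpSet v (supported R R B),
        (v a).support ⊆ Y := by
  classical
  have hfin := finite_jumpSet_supported_union_sdiff v B X.finite_toSet
  refine ⟨X ∪ hfin.toFinset.biUnion fun a => (v a).support, Finset.subset_union_left,
    fun a ha => ?_⟩
  exact (Finset.subset_biUnion_of_mem (fun a => (v a).support) (hfin.mem_toFinset.mpr ha)).trans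
    Finset.subset_union_right

theorem IsJumpClosed.exists_countable_extension (hB : IsJumpClosed v B) (x : I) :
    ∃ C, IsJumpClosed v C ∧ insert x B ⊆ C ∧ (C \ B).Countable := by
  choose next subset_next support_subset_next using
    exists_finset_superset_support_subset v B
  let X (n : ℕ) : Finset I := next^[n] {x}
  have X_succ (n : ℕ) : X (n + 1) = next (X n) := Function.iterate_succ_apply' next n {x}
  have X_mono : Monotone fun n => B ∪ (X n : Set I) := monotone_nat_of_le_succ fun n =>
    union_subset_union_right B (by simpa only [X_succ, Finset.coe_subset] using subset_next (X n))
  have subset_iUnion_X (n : ℕ) : B ∪ (X n : Set I) ⊆ ⋃ n, B ∪ (X n : Set I) :=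
    subset_iUnion (fun n => B ∪ (X n : Set I)) n
  refine ⟨⋃ n, B ∪ (X n : Set I), fun a ha => ?_, ?_, ?_⟩
  · rw [jumpSet_supported_iUnion v X_mono.directed_le, mem_iUnion] at ha
    obtain ⟨n, hn⟩ := ha
    by_cases haB : a ∈ jumpSet v (supported R R B)
    · exact supported_mono (subset_union_left.trans (subset_iUnion_X 0)) (hB a haB)
    · refine supported_mono (subset_union_right.trans (subset_iUnion_X (n + 1))) ?_
      rw [X_succ]
      exact Finset.coe_subset.mpr (support_subset_next (X n) a ⟨hn, haB⟩)
  · have hx : x ∈ B ∪ (X 0 : Set I) := Or.inr (Finset.mem_singleton_self x)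
    exact insert_subset (subset_iUnion_X 0 hx) (subset_union_left.trans (subset_iUnion_X 0))
  · refine (countable_iUnion fun n => (X n).countable_toSet).mono ?_
    rw [← union_iUnion, union_sdiff_left]
    exact sdiff_subset

theorem exists_rank_isJumpClosed_preimage_Iio (v : A → I →₀ R) :
    ∃ (W : Type t) (_ : LinearOrder W) (_ : WellFoundedLT W) (rank : I → W),
      (∀ w, (rank ⁻¹' {w}).Countable) ∧ ∀ w, IsJumpClosed v (rank ⁻¹' Iio w) := by
  obtain ⟨_, _⟩ := exists_wellFoundedLT I
  let cl : ClosureOperator (Set I) :=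
    ClosureOperator.ofCompletePred (IsJumpClosed v) fun _ => IsJumpClosed.sInter
  have mem_cl (y : I) : y ∈ cl (Iic y) := cl.le_closure _ self_mem_Iic
  let rank (y : I) : I := wellFounded_lt.min {x | y ∈ cl (Iic x)} ⟨y, mem_cl y⟩
  have rank_le_iff (x y : I) : rank y ≤ x ↔ y ∈ cl (Iic x) :=
    ⟨fun h => cl.monotone (Iic_subset_Iic.mpr h)
      (wellFounded_lt.min_mem {x | y ∈ cl (Iic x)} ⟨y, mem_cl y⟩),
      fun h => wellFounded_lt.min_le (s := {x | y ∈ cl (Iic x)}) h⟩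
  have closed_Iio (w : I) : IsJumpClosed v (rank ⁻¹' Iio w) := by
    have : rank ⁻¹' Iio w = ⋃ z : Iio w, cl (Iic z.1) := by
      ext y
      simp only [mem_preimage, mem_Iio, mem_iUnion, ← rank_le_iff, Subtype.exists, exists_prop]
      exact ⟨fun h => ⟨rank y, h, le_rfl⟩, fun ⟨z, hz, hyz⟩ => hyz.trans_lt hz⟩
    rw [this]
    refine IsJumpClosed.iUnion (Monotone.directed_le fun z z' h => ?_)
      fun z => cl.isClosed_closure (Iic z.1)
    exact cl.monotone (Iic_subset_Iic.mpr h)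
  refine ⟨I, _, ‹_›, rank, fun w => ?_, closed_Iio⟩
  obtain ⟨C, hC, hwC, hcount⟩ := (closed_Iio w).exists_countable_extension w
  have Iic_subset : Iic w ⊆ C := fun z hz => hwC <| (eq_or_lt_of_le hz).imp_right fun hzw =>
    ((rank_le_iff z z).mpr (mem_cl z)).trans_lt hzw
  have cl_subset : cl (Iic w) ⊆ C := cl.closure_min Iic_subset hC
  have fiber_subset : rank ⁻¹' {w} ⊆ C \ rank ⁻¹' Iio w := fun y (hy : rank y = w) =>
    ⟨cl_subset ((rank_le_iff w y).mp hy.le), fun h => h.ne hy⟩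
  exact hcount.mono fiber_subset

theorem exists_wellOrder_finite_isGreatest_support (hv : ∀ a, v a ∉ span R (v '' Iio a)) :
    ∃ (_ : LinearOrder I) (_ : WellFoundedLT I),
      ∀ x, {a | IsGreatest ((v a).support : Set I) x}.Finite := by
  obtain ⟨W, _, _, rank, rank_countable, rank_closed⟩ := exists_rank_isJumpClosed_preimage_Iio v
  obtain ⟨order, wf, rank_mono, fiber_finite⟩ :=
    exists_wellOrder_monotone_of_countable_fiber rank_countable
  refine ⟨order, wf, fun x => ((rank_closed (rank x)).finite_mem_supported_union hv
    (fiber_finite x)).subset fun a ha => ⟨fun y hy => ?_, fun h => (h ha.1).ne rfl⟩⟩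
  have hyx : y ≤ x := ha.2 hy
  exact (rank_mono hyx).lt_or_eq.imp_right fun h => ⟨h, hyx⟩

end JumpClosed

section Separation

variable {R : Type*} [Ring R] [IsDomain R] [Infinite R]

theorem exists_forall_mul_add_ne_zero {A : Type*} {s : Set A} (hs : s.Finite) {p : A → R}
    (hp : ∀ a ∈ s, p a ≠ 0) (q : A → R) : ∃ c, ∀ a ∈ s, p a * c + q a ≠ 0 := by
  have hbad : (⋃ a ∈ s, {c | p a * c + q a = 0}).Finite :=
    hs.biUnion fun a ha => Set.Subsingleton.finite fun c (hc : _ = 0) d (hd : _ = 0) =>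
      mul_left_cancel₀ (hp a ha) (add_right_cancel (hc.trans hd.symm))
  obtain ⟨c, hc⟩ := hbad.infinite_compl.nonempty
  exact ⟨c, fun a ha h => hc (mem_biUnion ha h)⟩

theorem exists_linearCombination_ne_zero_of_finite_isGreatest_support {I A : Type*}
    [LinearOrder I] [WellFoundedLT I] {v : A → I →₀ R} (hv : ∀ a, v a ≠ 0)
    (hfin : ∀ x, {a | IsGreatest ((v a).support : Set I) x}.Finite) :
    ∃ φ : I → R, ∀ a, linearCombination R φ (v a) ≠ 0 := by
  have extend (x : I) (ψ : I → R) : ∃ c, ∀ a, IsGreatest ((v a).support : Set I) x →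
      v a x * c + linearCombination R ψ ((v a).erase x) ≠ 0 :=
    exists_forall_mul_add_ne_zero (hfin x) (fun a ha => mem_support_iff.mp ha.1) _
  choose value value_spec using extend
  let φ : I → R := wellFounded_lt.fix fun x φ => value x fun y => if h : y < x then φ y h else 0
  have φ_eq (x : I) : φ x = value x fun y => if y < x then φ y else 0 :=
    wellFounded_lt.fix_eq (fun x φ => value x fun y => if h : y < x then φ y h else 0) x
  refine ⟨φ, fun a => ?_⟩
  let x := (v a).support.max' (support_nonempty_iff.mpr (hv a))
  have hx : IsGreatest ((v a).support : Set I) x := Finset.isGreatest_max' _ _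
  have erase_eq : linearCombination R (fun y => if y < x then φ y else 0) ((v a).erase x) =
      linearCombination R φ ((v a).erase x) := by
    refine Finsupp.sum_congr fun y hy => ?_
    rw [support_erase, Finset.mem_erase] at hy
    simp only [if_pos (lt_of_le_of_ne (hx.2 hy.2) hy.1)]
  rw [← single_add_erase x (v a), map_add, linearCombination_single, smul_eq_mul, φ_eq, ← erase_eq]
  exact value_spec x _ a hx

theorem exists_linearMap_apply_ne_zero [IsNoetherianRing R] {M A : Type*} [AddCommGroup M]
    [Module R M] [Module.Free R M] [LinearOrder A] [WellFoundedLT A] {v : A → M}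
    (hv : ∀ a, v a ∉ span R (v '' Iio a)) : ∃ φ : M →ₗ[R] R, ∀ a, φ (v a) ≠ 0 := by
  let b := Module.Free.chooseBasis R M
  let coords (a : A) := b.repr (v a)
  have hcoords (a : A) : coords a ∉ span R (coords '' Iio a) := fun h => hv a <| by
    simpa only [coords, image_image, LinearEquiv.coe_coe, LinearEquiv.symm_apply_apply] using
      apply_mem_span_image_of_mem_span b.repr.symm.toLinearMap h
  obtain ⟨_, _, hfin⟩ := exists_wellOrder_finite_isGreatest_support hcoords
  have coords_ne_zero (a : A) : coords a ≠ 0 := fun h => hcoords a (h ▸ zero_mem _)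
  obtain ⟨φ, hφ⟩ :=
    exists_linearCombination_ne_zero_of_finite_isGreatest_support coords_ne_zero hfin
  exact ⟨linearCombination R φ ∘ₗ b.repr.toLinearMap, hφ⟩

end Separation

section Relations

variable {R G Λ : Type*} [Ring R] [AddCommGroup G] [Module R G]

theorem span_image_single_eq_map_supported (π : (Λ →₀ R) →ₗ[R] G) (A : Set Λ) :
    span R ((fun α => π (single α 1)) '' A) = (supported R R A).map π := by
  rw [supported_eq_span_single, map_span, image_image]

theorem exists_linearMap_ne_zero_of_free_map_supported [IsDomain R] [Infinite R]
    [IsNoetherianRing R] [LinearOrder Λ] [WellFoundedLT Λ] {π : (Λ →₀ R) →ₗ[R] G}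
    (hπ : ∀ β, π (single β 1) ∉ span R ((fun α => π (single α 1)) '' Iio β)) (A : Set Λ)
    [Module.Free R ((supported R R A).map π)] :
    ∃ ψ : (Λ →₀ R) →ₗ[R] R, (∀ α ∈ A, ψ (single α 1) ≠ 0) ∧
      ∀ x ∈ supported R R A, π x = 0 → ψ x = 0 := by
  classical
  let π' := π.submoduleMap (supported R R A)
  let gen (α : A) : supported R R A := ⟨single α.1 1, single_mem_supported R 1 α.2⟩
  have hgen (α : A) : π' (gen α) ∉ span R ((fun β => π' (gen β)) '' Iio α) := fun h => by
    have := apply_mem_span_image_of_mem_span (Submodule.subtype _) h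
    rw [image_image] at this
    refine hπ α (span_mono ?_ this)
    rintro _ ⟨β, hβ, rfl⟩
    exact ⟨β, hβ, rfl⟩
  obtain ⟨φ, hφ⟩ := exists_linearMap_apply_ne_zero hgen
  have restrict_eq (x : supported R R A) : restrictDom R R A x = x :=
    LinearMap.congr_fun (restrictDom_comp_subtype A) x
  refine ⟨φ ∘ₗ π' ∘ₗ restrictDom R R A, fun α hα => ?_, fun x hx hx0 => ?_⟩
  · rw [LinearMap.comp_apply, LinearMap.comp_apply, restrict_eq (gen ⟨α, hα⟩)]
    exact hφ ⟨α, hα⟩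
  · have hx0' : π' ⟨x, hx⟩ = 0 := Subtype.ext hx0
    rw [LinearMap.comp_apply, LinearMap.comp_apply, restrict_eq ⟨x, hx⟩, hx0', map_zero]

theorem sum_mul_apply_single (ψ : (Λ →₀ R) →ₗ[R] R) (x : Λ →₀ R) :
    (x.sum fun α a => a * ψ (single α 1)) = ψ x := by
  conv_rhs => rw [← x.sum_single, map_finsuppSum]
  refine Finsupp.sum_congr fun α _ => ?_
  rw [← smul_eq_mul, ← map_smul, smul_single_one]

end Relations

theorem mk_biUnion_coe_finset_lt {κ : Cardinal.{u}} (hκ : Cardinal.aleph0 < κ) {J Λ : Type u}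
    (s : J → Finset Λ) {T : Set J} (hT : Cardinal.mk T < κ) :
    Cardinal.mk ↥(⋃ j ∈ T, (s j : Set Λ)) < κ :=
  calc Cardinal.mk ↥(⋃ j ∈ T, (s j : Set Λ))
      ≤ Cardinal.mk T * ⨆ j : T, Cardinal.mk (s j : Set Λ) := Cardinal.mk_biUnion_le _ T
    _ ≤ Cardinal.mk T * Cardinal.aleph0 := by
        gcongr
        exact ciSup_le' fun j => (s j).countable_toSet.le_aleph0
    _ < κ := Cardinal.mul_lt_of_lt hκ.le hT hκ

theorem stmt13_general {κ : Cardinal.{u}} (hκ : Cardinal.aleph0 < κ)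
    {R : Type*} [Ring R] [IsDomain R] [Infinite R] [IsNoetherianRing R]
    {G : Type u} [AddCommGroup G] [Module R G]
    (hfree : ∀ s : Set G, Cardinal.mk s < κ → Module.Free R (span R s))
    {Λ : Type u} [LinearOrder Λ] [WellFoundedLT Λ] (π : (Λ →₀ R) →ₗ[R] G)
    (hstar : ∀ β, π (single β 1) ∉ span R ((fun α => π (single α 1)) '' Iio β))
    {J : Type u} (k : J → Λ →₀ R) (hk : ∀ j, π (k j) = 0)
    (T : Set J) (hT : Cardinal.mk T < κ) :
    ∃ f : Λ → R, (∀ α, (∃ j ∈ T, k j α ≠ 0) → f α ≠ 0) ∧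
      ∀ j ∈ T, ((k j).sum fun α a => a * f α) = 0 := by
  let A : Set Λ := ⋃ j ∈ T, ((k j).support : Set Λ)
  have k_mem (j : J) (hj : j ∈ T) : k j ∈ supported R R A :=
    subset_biUnion_of_mem (u := fun j => ((k j).support : Set Λ)) hj
  have free_image : Module.Free R ((supported R R A).map π) := by
    rw [← span_image_single_eq_map_supported]
    exact hfree _ (Cardinal.mk_image_le.trans_lt (mk_biUnion_coe_finset_lt hκ _ hT))
  obtain ⟨ψ, ψ_ne, ψ_eq⟩ := exists_linearMap_ne_zero_of_free_map_supported hstar A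
  refine ⟨fun α => ψ (single α 1), fun α ⟨j, hj, hα⟩ => ?_, fun j hj => ?_⟩
  · exact ψ_ne α (k_mem j hj (mem_support_iff.mpr hα))
  · rw [sum_mul_apply_single]
    exact ψ_eq (k j) (k_mem j hj) (hk j)

/-- Proposition 2.5: let `κ` be uncountable, `G` a `κ`-free abelian group with
trivial dual, presented as `F/K` where `F` is free on the well-ordered set `Λ` of
cardinality `|G|` via the surjection `π`, satisfying that the images `π(F_β)` are
strictly increasing (condition `(*)`), and let the equations be indexed by a free
generating set `k` of `K = ker π`. Then every subsystem `T` of cardinality `< κ`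
has a nontrivial solution in `ℤ`: an assignment of nonzero integers to all
variables appearing in `T` satisfying every equation of `T`. -/
theorem stmt13 {κ : Cardinal.{u}} (hκ : Cardinal.aleph0 < κ)
    {G : Type u} [AddCommGroup G]
    (hfree : ∀ s : Set G, Cardinal.mk s < κ → Module.Free ℤ (Submodule.span ℤ s))
    (hdual : ∀ φ : G →+ ℤ, φ = 0)
    {Λ : Type u} [LinearOrder Λ] [WellFoundedLT Λ]
    (hcard : Cardinal.mk Λ = Cardinal.mk G)
    (π : (Λ →₀ ℤ) →ₗ[ℤ] G) (hπ : Function.Surjective π)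
    (hstar : ∀ β : Λ, π (Finsupp.single β 1) ∉
      Submodule.span ℤ ((fun α => π (Finsupp.single α 1)) '' Set.Iio β))
    {J : Type u} (k : J → (Λ →₀ ℤ)) (hki : LinearIndependent ℤ k)
    (hk : Submodule.span ℤ (Set.range k) = LinearMap.ker π)
    (T : Set J) (hT : Cardinal.mk T < κ) :
    ∃ f : Λ → ℤ, (∀ α, (∃ j ∈ T, k j α ≠ 0) → f α ≠ 0) ∧
      ∀ j ∈ T, ((k j).sum fun α a => a * f α) = 0 := by
  exact stmt13_general hκ hfree π hstar k
    (fun j => LinearMap.mem_ker.mp (hk ▸ Submodule.subset_span (Set.mem_range_self j))) T hT
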